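/- arXiv:2009.08262 — 2 statements merged into one kernel-verified Lean document; each statement's English description precedes it below -/
import Mathlib

section
/- Let g ∈ H', f^0 ∈ H, and define the iterates f^{n+1} = T(f^n) where T(f) = S_{W,P}(f + K*(g − Kf)). Then: (A) there exists f* ∈ H such that (f^n) converges weakly to f* and f* is a minimizer of Φ over H; (B) if moreover either K is injective or p_γ > 1 for every γ ∈ Γ, then Φ has a unique minimizer. -/
open scoped RealInnerProductSpace ENNReal
open Filter Topology

section Scalar

theorem convexOn_abs_rpow {p : ℝ} (hp : 1 ≤ p) :
    ConvexOn ℝ Set.univ fun x : ℝ => |x| ^ p := by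
  refine ⟨convex_univ, fun x _ y _ a b ha hb hab => ?_⟩
  have habs : |a • x + b • y| ≤ a • |x| + b • |y| := by
    simpa [abs_mul, abs_of_nonneg ha, abs_of_nonneg hb] using abs_add_le (a * x) (b * y)
  exact (Real.rpow_le_rpow (abs_nonneg _) habs (by linarith)).trans
    ((convexOn_rpow hp).2 (abs_nonneg x) (abs_nonneg y) ha hb hab)

theorem strictConvexOn_abs_rpow {p : ℝ} (hp : 1 < p) :
    StrictConvexOn ℝ Set.univ fun x : ℝ => |x| ^ p := by
  refine ⟨convex_univ, fun x _ y _ hxy a b ha hb hab => ?_⟩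
  have habs : |a • x + b • y| ≤ a • |x| + b • |y| := by
    simpa [abs_mul, abs_of_pos ha, abs_of_pos hb] using abs_add_le (a * x) (b * y)
  by_cases h : |x| = |y|
  · obtain rfl : x = -y := (abs_eq_abs.1 h).resolve_left hxy
    have hy : 0 < |y| := abs_pos.2 fun h0 => hxy (by simp [h0])
    have hlt : |a • -y + b • y| < |y| := by
      have heq : a • -y + b • y = (b - a) * y := by simp only [smul_eq_mul]; ring
      rw [heq, abs_mul]
      have : |b - a| < 1 := abs_lt.2 ⟨by linarith, by linarith⟩
      nlinarith
    calc |a • -y + b • y| ^ p < |y| ^ p :=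
          Real.rpow_lt_rpow (abs_nonneg _) hlt (by linarith)
      _ = a • |-y| ^ p + b • |y| ^ p := by
          rw [abs_neg, ← add_smul, hab, one_smul]
  · exact (Real.rpow_le_rpow (abs_nonneg _) habs (by linarith)).trans_lt
      ((strictConvexOn_rpow hp).2 (abs_nonneg x) (abs_nonneg y) h ha hb hab)

/-- The minimizer of a quadratic plus a convex function enjoys quadratic growth. -/
theorem ConvexOn.quadratic_growth_of_isMinimizer {φ : ℝ → ℝ} (hφ : ConvexOn ℝ Set.univ φ)
    {b s : ℝ} (hs : ∀ x, s ^ 2 - 2 * b * s + φ s ≤ x ^ 2 - 2 * b * x + φ x) (x : ℝ) :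
    (s - b) ^ 2 + φ s + (x - s) ^ 2 ≤ (x - b) ^ 2 + φ x := by
  have key : ∀ t : ℝ, t ∈ Set.Ioo (0 : ℝ) 1 →
      0 ≤ 2 * (s - b) * (x - s) + (φ x - φ s) + t * (x - s) ^ 2 := by
    intro t ht
    have h1 := hs ((1 - t) • s + t • x)
    have h2 := hφ.2 (Set.mem_univ s) (Set.mem_univ x) (sub_nonneg.2 ht.2.le) ht.1.le (by ring)
    simp only [smul_eq_mul] at h1 h2
    refine nonneg_of_mul_nonneg_right (a := t) ?_ ht.1
    nlinarith
  have hlim : Tendsto (fun t : ℝ => 2 * (s - b) * (x - s) + (φ x - φ s) + t * (x - s) ^ 2)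
      (𝓝[>] 0) (𝓝 (2 * (s - b) * (x - s) + (φ x - φ s) + 0 * (x - s) ^ 2)) :=
    ((continuous_const.add (continuous_id.mul continuous_const)).tendsto 0).mono_left
      nhdsWithin_le_nhds
  have h0 := ge_of_tendsto hlim
    (eventually_of_mem (Ioo_mem_nhdsGT one_pos) key)
  nlinarith

/-- A bound on `c * |x| ^ p` with `1 ≤ p ≤ 2` yields a bound on `x ^ 2`. -/
theorem sq_le_mul_of_mul_abs_rpow_le {c w p x M : ℝ} (hc : 0 < c) (hw : c ≤ w) (hp1 : 1 ≤ p)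
    (hp2 : p ≤ 2) (hM : w * |x| ^ p ≤ M) :
    x ^ 2 ≤ (max 1 (M / c)) / c * (w * |x| ^ p) := by
  have hpos : 0 ≤ |x| ^ p := by positivity
  have hle : |x| ^ p ≤ w * |x| ^ p / c := by
    rw [le_div_iff₀ hc]; nlinarith
  have habs : |x| ≤ max 1 (M / c) := by
    rcases le_total |x| 1 with h | h
    · exact h.trans (le_max_left _ _)
    · refine le_trans ?_ (le_max_right _ _)
      calc |x| = |x| ^ (1 : ℝ) := (Real.rpow_one _).symm
        _ ≤ |x| ^ p := Real.rpow_le_rpow_of_exponent_le h hp1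
        _ ≤ M / c := hle.trans (by gcongr)
  have hB : (1 : ℝ) ≤ max 1 (M / c) := le_max_left _ _
  have hsq : x ^ 2 ≤ max 1 (M / c) * |x| ^ p := by
    rcases le_total |x| 1 with h | h
    · rcases (abs_nonneg x).eq_or_lt with h0 | h0
      · rw [← sq_abs, ← h0]; simp; positivity
      · have : |x| ^ (2 : ℝ) ≤ |x| ^ p := Real.rpow_le_rpow_of_exponent_ge h0 h hp2
        rw [Real.rpow_two, sq_abs] at this
        nlinarith
    · have : |x| ≤ |x| ^ p := by
        simpa using Real.rpow_le_rpow_of_exponent_le h hp1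
      rw [← sq_abs, sq]
      exact mul_le_mul habs this (abs_nonneg _) (by positivity)
  calc x ^ 2 ≤ max 1 (M / c) * |x| ^ p := hsq
    _ ≤ max 1 (M / c) * (w * |x| ^ p / c) := by gcongr
    _ = _ := by ring

/-- Telescoping a one-step descent estimate gives an `O(1/n)` rate. -/
theorem le_add_div_of_descent {u d : ℕ → ℝ} {m : ℝ} (hu : Antitone u) (hd : ∀ n, 0 ≤ d n)
    (h : ∀ n, u (n + 1) + d (n + 1) ≤ m + d n) {n : ℕ} (hn : 0 < n) :
    u n ≤ m + d 0 / n := by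
  have key : ∀ n : ℕ, (n : ℝ) * (u n - m) + d n ≤ d 0 := by
    intro n
    induction n with
    | zero => simp
    | succ k ih =>
      have h1 := hu (Nat.le_succ k)
      have h2 := h k
      have h3 : (k : ℝ) * u (k + 1) ≤ k * u k := by gcongr
      push_cast
      nlinarith
  have h1 := key n
  have h2 := hd n
  have h3 : u n - m ≤ d 0 / n := by
    rw [le_div_iff₀ (by positivity)]; nlinarith
  linarith

end Scalar

section WeakConvergence

variable {H : Type*} [NormedAddCommGroup H] [InnerProductSpace ℝ H] [CompleteSpace H]

/-- A bounded family in a Hilbert space converges weakly along every ultrafilter. -/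
theorem Ultrafilter.exists_weak_limit {ι : Type*} (U : Ultrafilter ι) {x : ι → H} {r : ℝ}
    (hx : ∀ i, ‖x i‖ ≤ r) :
    ∃ a : H, ∀ y, Tendsto (fun i => ⟪x i, y⟫) U (𝓝 ⟪a, y⟫) := by
  let D : ι → WeakDual ℝ H := fun i =>
    StrongDual.toWeakDual (InnerProductSpace.toDual ℝ H (x i))
  have hmem : ∀ i, D i ∈ WeakDual.toStrongDual ⁻¹'
      Metric.closedBall (0 : StrongDual ℝ H) r := by
    intro i
    simpa [D] using hx i
  obtain ⟨l, -, hl⟩ := (WeakDual.isCompact_closedBall (0 : StrongDual ℝ H) r).ultrafilter_le_nhds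
    (U.map D) (le_principal_iff.2 (mem_map.2 (Eventually.of_forall hmem)))
  refine ⟨(InnerProductSpace.toDual ℝ H).symm (WeakDual.toStrongDual l), fun y => ?_⟩
  have := tendsto_iff_forall_eval_tendsto_topDualPairing.1
    (show Tendsto D U (𝓝 l) from hl) y
  rw [InnerProductSpace.toDual_symm_apply]
  exact this

/-- **Opial's lemma**: a bounded sequence which is Fejér monotone with respect to a set containing
all its weak cluster points converges weakly to a point of that set. -/
theorem exists_weak_limit_of_fejer {x : ℕ → H} {r : ℝ} (hx : ∀ n, ‖x n‖ ≤ r) {C : Set H}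
    (hfejer : ∀ z ∈ C, Antitone fun n => ‖z - x n‖ ^ 2)
    (hC : ∀ (U : Ultrafilter ℕ) (a : H), (U : Filter ℕ) ≤ atTop →
      (∀ y, Tendsto (fun n => ⟪x n, y⟫) U (𝓝 ⟪a, y⟫)) → a ∈ C) :
    ∃ a ∈ C, ∀ y, Tendsto (fun n => ⟪x n, y⟫) atTop (𝓝 ⟪a, y⟫) := by
  have hconv : ∀ z ∈ C, ∃ l, Tendsto (fun n => ‖z - x n‖ ^ 2) atTop (𝓝 l) := fun z hz =>
    ⟨_, tendsto_atTop_ciInf (hfejer z hz) ⟨0, by rintro _ ⟨n, rfl⟩; positivity⟩⟩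
  obtain ⟨a, ha⟩ := (Ultrafilter.of (atTop : Filter ℕ)).exists_weak_limit hx
  have haC : a ∈ C := hC _ a (Ultrafilter.of_le _) ha
  refine ⟨a, haC, fun y => (tendsto_iff_ultrafilter _ _ _).2 fun U hU => ?_⟩
  obtain ⟨b, hb⟩ := U.exists_weak_limit hx
  have hbC : b ∈ C := hC U b hU hb
  obtain ⟨l, hl⟩ := hconv a haC
  obtain ⟨m, hm⟩ := hconv b hbC
  have hdiff : Tendsto (fun n => ⟪x n, a - b⟫) atTop
      (𝓝 ((m - l + (‖a‖ ^ 2 - ‖b‖ ^ 2)) / 2)) := by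
    refine (((hm.sub hl).add_const (‖a‖ ^ 2 - ‖b‖ ^ 2)).div_const 2).congr fun n => ?_
    rw [norm_sub_sq_real, norm_sub_sq_real, inner_sub_right, real_inner_comm (x n) a,
      real_inner_comm (x n) b]
    ring
  have h1 := tendsto_nhds_unique (ha (a - b)) (hdiff.mono_left (Ultrafilter.of_le _))
  have h2 := tendsto_nhds_unique (hb (a - b)) (hdiff.mono_left hU)
  have hab : a = b := by
    rw [← sub_eq_zero, ← inner_self_eq_zero (𝕜 := ℝ), inner_sub_left, h1, h2, sub_self]
  exact hab ▸ hb y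

end WeakConvergence

section Thresholding

variable {H H' : Type*} [NormedAddCommGroup H] [InnerProductSpace ℝ H]
  [NormedAddCommGroup H'] [InnerProductSpace ℝ H'] {Γ : Type*}

theorem HilbertBasis.hasSum_inner_sq (e : HilbertBasis Γ ℝ H) (x : H) :
    HasSum (fun γ => ⟪x, e γ⟫ ^ 2) (‖x‖ ^ 2) := by
  have h := e.hasSum_inner_mul_inner x x
  rw [real_inner_self_eq_norm_sq] at h
  refine h.congr_fun fun γ => ?_
  rw [real_inner_comm x (e γ), sq]

/-- The real-valued penalized least squares functional; meaningful where the penalty is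
summable. -/
noncomputable def penalizedLeastSquares (e : HilbertBasis Γ ℝ H) (K : H →L[ℝ] H') (g : H')
    (φ : Γ → ℝ → ℝ) (f : H) : ℝ :=
  ‖K f - g‖ ^ 2 + ∑' γ, φ γ ⟪f, e γ⟫

variable {e : HilbertBasis Γ ℝ H} {K : H →L[ℝ] H'} {g : H'} {φ : Γ → ℝ → ℝ}

theorem summable_penalty_of_isMinimizer (hφ0 : ∀ γ x, 0 ≤ φ γ x)
    (hφ : ∀ γ, ConvexOn ℝ Set.univ (φ γ)) {v a h : H}
    (ha : ∀ γ x, ⟪a, e γ⟫ ^ 2 - 2 * ⟪v, e γ⟫ * ⟪a, e γ⟫ + φ γ ⟪a, e γ⟫ ≤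
      x ^ 2 - 2 * ⟪v, e γ⟫ * x + φ γ x)
    (hh : Summable fun γ => φ γ ⟪h, e γ⟫) :
    Summable fun γ => φ γ ⟪a, e γ⟫ := by
  refine Summable.of_nonneg_of_le (fun γ => hφ0 γ _) (fun γ => ?_)
    ((e.hasSum_inner_sq (h - v)).summable.add hh)
  have := (hφ γ).quadratic_growth_of_isMinimizer (ha γ) ⟪h, e γ⟫
  rw [inner_sub_left]
  nlinarith [sq_nonneg (⟪a, e γ⟫ - ⟪v, e γ⟫), sq_nonneg (⟪h, e γ⟫ - ⟪a, e γ⟫)]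

theorem norm_sq_add_tsum_le_of_isMinimizer (hφ0 : ∀ γ x, 0 ≤ φ γ x)
    (hφ : ∀ γ, ConvexOn ℝ Set.univ (φ γ)) {v a h : H}
    (ha : ∀ γ x, ⟪a, e γ⟫ ^ 2 - 2 * ⟪v, e γ⟫ * ⟪a, e γ⟫ + φ γ ⟪a, e γ⟫ ≤
      x ^ 2 - 2 * ⟪v, e γ⟫ * x + φ γ x)
    (hh : Summable fun γ => φ γ ⟪h, e γ⟫) :
    ‖a - v‖ ^ 2 + ∑' γ, φ γ ⟪a, e γ⟫ + ‖h - a‖ ^ 2 ≤ ‖h - v‖ ^ 2 + ∑' γ, φ γ ⟪h, e γ⟫ := by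
  refine hasSum_le (fun γ => ?_)
    (((e.hasSum_inner_sq (a - v)).add
      (summable_penalty_of_isMinimizer hφ0 hφ ha hh).hasSum).add (e.hasSum_inner_sq (h - a)))
    ((e.hasSum_inner_sq (h - v)).add hh.hasSum)
  simp only [inner_sub_left]
  exact (hφ γ).quadratic_growth_of_isMinimizer (ha γ) ⟪h, e γ⟫

/-- One-step estimate for the thresholded Landweber iteration. -/
theorem penalizedLeastSquares_step [CompleteSpace H] [CompleteSpace H'] (hK : ‖K‖ ≤ 1)
    (hφ0 : ∀ γ x, 0 ≤ φ γ x) (hφ : ∀ γ, ConvexOn ℝ Set.univ (φ γ)) {f a h : H}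
    (ha : ∀ γ x, ⟪a, e γ⟫ ^ 2 -
        2 * ⟪f + (ContinuousLinearMap.adjoint K) (g - K f), e γ⟫ * ⟪a, e γ⟫ + φ γ ⟪a, e γ⟫ ≤
      x ^ 2 - 2 * ⟪f + (ContinuousLinearMap.adjoint K) (g - K f), e γ⟫ * x + φ γ x)
    (hh : Summable fun γ => φ γ ⟪h, e γ⟫) :
    penalizedLeastSquares e K g φ a + ‖h - a‖ ^ 2 ≤
      penalizedLeastSquares e K g φ h + ‖h - f‖ ^ 2 := by
  have hprox := norm_sq_add_tsum_le_of_isMinimizer hφ0 hφ ha hh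
  have expand : ∀ z : H, ‖z - (f + (ContinuousLinearMap.adjoint K) (g - K f))‖ ^ 2 =
      ‖z - f‖ ^ 2 - ‖K (z - f)‖ ^ 2 + ‖K z - g‖ ^ 2 +
        (‖(ContinuousLinearMap.adjoint K) (g - K f)‖ ^ 2 - ‖K f - g‖ ^ 2) := by
    intro z
    have h1 : z - (f + (ContinuousLinearMap.adjoint K) (g - K f)) =
        (z - f) - (ContinuousLinearMap.adjoint K) (g - K f) := by abel
    have h2 : K z - g = K (z - f) - (g - K f) := by rw [map_sub]; abel
    rw [h1, h2, norm_sub_sq_real, norm_sub_sq_real (K (z - f)),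
      ContinuousLinearMap.adjoint_inner_right, norm_sub_rev (K f) g]
    ring
  have hcontr : ‖K (a - f)‖ ^ 2 ≤ ‖a - f‖ ^ 2 := by
    gcongr
    exact K.le_of_opNorm_le_of_le hK le_rfl |>.trans_eq (one_mul _)
  rw [expand, expand] at hprox
  unfold penalizedLeastSquares
  nlinarith [sq_nonneg ‖K (h - f)‖]

/-- Weak sequential lower semicontinuity on finite partial sums of the penalty. -/
theorem norm_sq_add_sum_le_of_weak_limit [CompleteSpace H] [CompleteSpace H'] {ι : Type*}
    {l : Filter ι} [l.NeBot]
    (hφ0 : ∀ γ x, 0 ≤ φ γ x) (hφc : ∀ γ, Continuous (φ γ)) {x : ι → H} {a : H}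
    (hx : ∀ y, Tendsto (fun n => ⟪x n, y⟫) l (𝓝 ⟪a, y⟫))
    (hsum : ∀ n, Summable fun γ => φ γ ⟪x n, e γ⟫) {u : ι → ℝ} {m : ℝ}
    (hu : Tendsto u l (𝓝 m)) (hle : ∀ᶠ n in l, penalizedLeastSquares e K g φ (x n) ≤ u n)
    (s : Finset Γ) :
    ‖K a - g‖ ^ 2 + ∑ γ ∈ s, φ γ ⟪a, e γ⟫ ≤ m := by
  have hlim : Tendsto (fun n => ‖K a - g‖ ^ 2 +
      2 * (⟪x n, (ContinuousLinearMap.adjoint K) (K a - g)⟫ -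
        ⟪a, (ContinuousLinearMap.adjoint K) (K a - g)⟫) + ∑ γ ∈ s, φ γ ⟪x n, e γ⟫) l
      (𝓝 (‖K a - g‖ ^ 2 + 2 * (⟪a, (ContinuousLinearMap.adjoint K) (K a - g)⟫ -
        ⟪a, (ContinuousLinearMap.adjoint K) (K a - g)⟫) + ∑ γ ∈ s, φ γ ⟪a, e γ⟫)) :=
    (((hx _).sub_const _).const_mul 2 |>.const_add _).add
      (tendsto_finsetSum _ fun γ _ => ((hφc γ).tendsto _).comp (hx (e γ)))
  rw [sub_self, mul_zero, add_zero] at hlim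
  refine le_of_tendsto_of_tendsto hlim hu (hle.mono fun n hn => le_trans ?_ hn)
  have h1 : ∑ γ ∈ s, φ γ ⟪x n, e γ⟫ ≤ ∑' γ, φ γ ⟪x n, e γ⟫ :=
    (hsum n).sum_le_tsum s fun γ _ => hφ0 γ _
  have h2 : ‖K (x n) - g‖ ^ 2 = ‖K (x n - a)‖ ^ 2 +
      2 * (⟪x n, (ContinuousLinearMap.adjoint K) (K a - g)⟫ -
        ⟪a, (ContinuousLinearMap.adjoint K) (K a - g)⟫) + ‖K a - g‖ ^ 2 := by
    have : K (x n) - g = K (x n - a) + (K a - g) := by rw [map_sub]; abel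
    rw [this, norm_add_sq_real, ← inner_sub_left, ContinuousLinearMap.adjoint_inner_right]
  unfold penalizedLeastSquares
  nlinarith [sq_nonneg ‖K (x n - a)‖]

/-- Weak convergence of the thresholded Landweber iteration to a minimizer, for convex
continuous coordinatewise penalties with bounded sublevel sets. -/
theorem exists_weak_limit_isMinimizer [CompleteSpace H] [CompleteSpace H'] (hK : ‖K‖ ≤ 1)
    (hφ0 : ∀ γ x, 0 ≤ φ γ x) (hφ : ∀ γ, ConvexOn ℝ Set.univ (φ γ))
    (hφc : ∀ γ, Continuous (φ γ))
    (hcoer : ∀ M, ∃ r, ∀ f : H, (Summable fun γ => φ γ ⟪f, e γ⟫) →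
      ∑' γ, φ γ ⟪f, e γ⟫ ≤ M → ‖f‖ ≤ r)
    {x : ℕ → H} (hx0 : Summable fun γ => φ γ ⟪x 0, e γ⟫)
    (hx : ∀ n γ t, ⟪x (n + 1), e γ⟫ ^ 2 -
        2 * ⟪x n + (ContinuousLinearMap.adjoint K) (g - K (x n)), e γ⟫ * ⟪x (n + 1), e γ⟫ +
          φ γ ⟪x (n + 1), e γ⟫ ≤
      t ^ 2 - 2 * ⟪x n + (ContinuousLinearMap.adjoint K) (g - K (x n)), e γ⟫ * t + φ γ t) :
    ∃ a : H, (∀ y, Tendsto (fun n => ⟪x n, y⟫) atTop (𝓝 ⟪a, y⟫)) ∧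
      (Summable fun γ => φ γ ⟪a, e γ⟫) ∧
      ∀ h : H, (Summable fun γ => φ γ ⟪h, e γ⟫) →
        penalizedLeastSquares e K g φ a ≤ penalizedLeastSquares e K g φ h := by
  have hsum : ∀ n, Summable fun γ => φ γ ⟪x n, e γ⟫ := fun n => by
    cases n with
    | zero => exact hx0
    | succ n => exact summable_penalty_of_isMinimizer hφ0 hφ (hx n) hx0
  have hstep : ∀ n (h : H), (Summable fun γ => φ γ ⟪h, e γ⟫) →
      penalizedLeastSquares e K g φ (x (n + 1)) + ‖h - x (n + 1)‖ ^ 2 ≤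
        penalizedLeastSquares e K g φ h + ‖h - x n‖ ^ 2 :=
    fun n h hh => penalizedLeastSquares_step hK hφ0 hφ (hx n) hh
  have hanti : Antitone fun n => penalizedLeastSquares e K g φ (x n) :=
    antitone_nat_of_succ_le fun n => by
      have := hstep n (x n) (hsum n)
      rw [sub_self, norm_zero] at this
      nlinarith [sq_nonneg ‖x n - x (n + 1)‖]
  obtain ⟨r, hr⟩ := hcoer (penalizedLeastSquares e K g φ (x 0))
  have hbdd : ∀ n, ‖x n‖ ≤ r := fun n => hr _ (hsum n)
    (le_trans (le_add_of_nonneg_left (sq_nonneg _)) (hanti n.zero_le))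
  let C : Set H := {a | (Summable fun γ => φ γ ⟪a, e γ⟫) ∧
    ∀ h : H, (Summable fun γ => φ γ ⟪h, e γ⟫) →
      penalizedLeastSquares e K g φ a ≤ penalizedLeastSquares e K g φ h}
  obtain ⟨a, haC, ha⟩ := exists_weak_limit_of_fejer (C := C) hbdd
    (fun z hz => antitone_nat_of_succ_le fun n => by
      have h1 := hstep n z hz.1
      have h2 := hz.2 _ (hsum (n + 1))
      linarith)
    (fun U a hU ha => by
      have hle : ∀ h : H, (Summable fun γ => φ γ ⟪h, e γ⟫) → ∀ s : Finset Γ,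
          ‖K a - g‖ ^ 2 + ∑ γ ∈ s, φ γ ⟪a, e γ⟫ ≤ penalizedLeastSquares e K g φ h := by
        intro h hh s
        have hlim : Tendsto (fun n : ℕ => penalizedLeastSquares e K g φ h +
            ‖h - x 0‖ ^ 2 / (n : ℝ)) U (𝓝 (penalizedLeastSquares e K g φ h)) := by
          simpa using ((tendsto_const_div_atTop_nhds_zero_nat (‖h - x 0‖ ^ 2)).const_add
            (penalizedLeastSquares e K g φ h)).mono_left hU
        exact norm_sq_add_sum_le_of_weak_limit hφ0 hφc ha hsum hlim
          (hU (eventually_gt_atTop 0 |>.mono fun n hn => le_add_div_of_descent hanti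
            (fun n => sq_nonneg ‖h - x n‖) (fun n => hstep n h hh) hn)) s
      have hasum : Summable fun γ => φ γ ⟪a, e γ⟫ :=
        summable_of_sum_le (fun γ => hφ0 γ _) fun s =>
          (le_add_of_nonneg_left (sq_nonneg ‖K a - g‖)).trans (hle (x 0) hx0 s)
      refine ⟨hasum, fun h hh => ?_⟩
      have := hasum.tsum_le_of_sum_le fun s => le_sub_iff_add_le'.2 (hle h hh s)
      unfold penalizedLeastSquares at this ⊢
      linarith)
  exact ⟨a, ha, haC⟩

theorem eq_of_isMinimizer (hφ : ∀ γ, ConvexOn ℝ Set.univ (φ γ))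
    (hφ0 : ∀ γ x, 0 ≤ φ γ x)
    (hstrict : Function.Injective K ∨ ∀ γ, StrictConvexOn ℝ Set.univ (φ γ)) {x y : H}
    (hx : Summable fun γ => φ γ ⟪x, e γ⟫) (hy : Summable fun γ => φ γ ⟪y, e γ⟫)
    (hxmin : ∀ h : H, (Summable fun γ => φ γ ⟪h, e γ⟫) →
      penalizedLeastSquares e K g φ x ≤ penalizedLeastSquares e K g φ h)
    (hymin : ∀ h : H, (Summable fun γ => φ γ ⟪h, e γ⟫) →
      penalizedLeastSquares e K g φ y ≤ penalizedLeastSquares e K g φ h) :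
    x = y := by
  set z : H := (2⁻¹ : ℝ) • x + (2⁻¹ : ℝ) • y with hz
  have hcoord : ∀ γ, ⟪z, e γ⟫ = (2⁻¹ : ℝ) • ⟪x, e γ⟫ + (2⁻¹ : ℝ) • ⟪y, e γ⟫ := fun γ => by
    rw [hz, inner_add_left, real_inner_smul_left, real_inner_smul_left, smul_eq_mul, smul_eq_mul]
  have hmid : ∀ γ, φ γ ⟪z, e γ⟫ ≤ (2⁻¹ : ℝ) • φ γ ⟪x, e γ⟫ + (2⁻¹ : ℝ) • φ γ ⟪y, e γ⟫ :=
    fun γ => hcoord γ ▸ (hφ γ).2 (Set.mem_univ _) (Set.mem_univ _) (by norm_num) (by norm_num)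
      (by norm_num)
  have hsum := (hx.const_smul (2⁻¹ : ℝ)).add (hy.const_smul (2⁻¹ : ℝ))
  have hzs : Summable fun γ => φ γ ⟪z, e γ⟫ :=
    Summable.of_nonneg_of_le (fun γ => hφ0 γ _) hmid hsum
  have hgap := ((hx.hasSum.const_smul (2⁻¹ : ℝ)).add (hy.hasSum.const_smul (2⁻¹ : ℝ))).sub
    hzs.hasSum
  have hgap0 := hgap.nonneg fun γ => sub_nonneg.2 (hmid γ)
  have hpar : ‖K z - g‖ ^ 2 =
      (‖K x - g‖ ^ 2 + ‖K y - g‖ ^ 2) / 2 - ‖K x - K y‖ ^ 2 / 4 := by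
    have h1 : K z - g = (2⁻¹ : ℝ) • ((K x - g) + (K y - g)) := by
      rw [hz, map_add, map_smul, map_smul]; module
    have h2 : K x - K y = (K x - g) - (K y - g) := by abel
    rw [h1, h2, norm_smul, mul_pow, norm_add_sq_real, norm_sub_sq_real (K x - g)]
    norm_num
    ring
  have h1 := hxmin z hzs
  have h2 := hymin z hzs
  unfold penalizedLeastSquares at h1 h2
  simp only [smul_eq_mul] at hgap0 hgap hmid
  rcases hstrict with hinj | hstrict
  · apply hinj
    rw [← sub_eq_zero, ← norm_eq_zero, ← sq_eq_zero_iff]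
    exact le_antisymm (by linarith) (sq_nonneg _)
  · have hcoeff : ∀ γ, ⟪x, e γ⟫ = ⟪y, e γ⟫ := by
      intro γ
      by_contra hne
      have hlt := (hstrict γ).2 (Set.mem_univ _) (Set.mem_univ _) hne
        (show (0 : ℝ) < 2⁻¹ by norm_num) (show (0 : ℝ) < 2⁻¹ by norm_num) (by norm_num)
      rw [← hcoord γ] at hlt
      simp only [smul_eq_mul] at hlt
      have := le_hasSum hgap γ fun i _ => sub_nonneg.2 (hmid i)
      nlinarith [sq_nonneg ‖K x - K y‖]
    have := e.hasSum_inner_sq (x - y)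
    simp only [inner_sub_left, hcoeff, sub_self, zero_pow two_ne_zero] at this
    have h0 := this.unique hasSum_zero
    simpa [sub_eq_zero] using h0

end Thresholding

/-- Weak convergence theorem: the iterates `f^{n+1} = T(f^n)` converge weakly to a minimizer
of `Φ`; if moreover `K` is injective or all `p γ > 1`, the minimizer of `Φ` is unique. -/
theorem stmt_15
    {H H' : Type*} [NormedAddCommGroup H] [InnerProductSpace ℝ H] [CompleteSpace H]
    [NormedAddCommGroup H'] [InnerProductSpace ℝ H'] [CompleteSpace H']
    {Γ : Type*} [Countable Γ]
    (e : HilbertBasis Γ ℝ H)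
    (K : H →L[ℝ] H') (hK : ‖K‖ < 1)
    (w : Γ → ℝ) (c : ℝ) (hc : 0 < c) (hw : ∀ γ, c ≤ w γ)
    (p : Γ → ℝ) (hp : ∀ γ, 1 ≤ p γ ∧ p γ ≤ 2)
    (g : H')
    (Φ : H → ℝ≥0∞)
    (hΦ : ∀ f, Φ f = ENNReal.ofReal (‖K f - g‖ ^ 2) +
      ∑' γ, ENNReal.ofReal (w γ * |⟪f, e γ⟫| ^ (p γ)))
    (S : Γ → ℝ → ℝ)
    (hS : ∀ (γ : Γ) (b x : ℝ),
      (S γ b) ^ 2 - 2 * b * S γ b + w γ * |S γ b| ^ (p γ) ≤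
        x ^ 2 - 2 * b * x + w γ * |x| ^ (p γ))
    (T : H → H)
    (hT : ∀ (f : H) (γ : Γ),
      ⟪T f, e γ⟫ = S γ ⟪f + (ContinuousLinearMap.adjoint K) (g - K f), e γ⟫)
    (fseq : ℕ → H)
    (hstep : ∀ n, fseq (n + 1) = T (fseq n)) :
    (∃ fstar : H,
      (∀ y : H, Filter.Tendsto (fun n => ⟪fseq n, y⟫) Filter.atTop (nhds ⟪fstar, y⟫)) ∧
      ∀ f : H, Φ fstar ≤ Φ f) ∧
    ((Function.Injective K ∨ ∀ γ, 1 < p γ) → ∃! fm : H, ∀ f : H, Φ fm ≤ Φ f) := by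
  let φ : Γ → ℝ → ℝ := fun γ t => w γ * |t| ^ p γ
  have hw0 : ∀ γ, 0 ≤ w γ := fun γ => hc.le.trans (hw γ)
  have hφ0 : ∀ γ t, 0 ≤ φ γ t := fun γ t => mul_nonneg (hw0 γ) (by positivity)
  have hφ : ∀ γ, ConvexOn ℝ Set.univ (φ γ) := fun γ =>
    (convexOn_abs_rpow (hp γ).1).smul (hw0 γ)
  have hφc : ∀ γ, Continuous (φ γ) := fun γ =>
    continuous_const.mul (continuous_abs.rpow_const fun _ => Or.inr (by linarith [(hp γ).1]))
  have hzero : Summable fun γ => φ γ ⟪(0 : H), e γ⟫ := by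
    have : ∀ γ, φ γ ⟪(0 : H), e γ⟫ = 0 := fun γ => by
      simp [φ, Real.zero_rpow (show p γ ≠ 0 by linarith [(hp γ).1])]
    simpa only [this] using summable_zero
  have hmin : ∀ n γ t, ⟪fseq (n + 1), e γ⟫ ^ 2 -
      2 * ⟪fseq n + (ContinuousLinearMap.adjoint K) (g - K (fseq n)), e γ⟫ *
        ⟪fseq (n + 1), e γ⟫ + φ γ ⟪fseq (n + 1), e γ⟫ ≤
      t ^ 2 - 2 * ⟪fseq n + (ContinuousLinearMap.adjoint K) (g - K (fseq n)), e γ⟫ * t +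
        φ γ t := fun n γ t => by
    rw [hstep, hT]
    exact hS γ _ t
  have hcoer : ∀ M, ∃ r, ∀ f : H, (Summable fun γ => φ γ ⟪f, e γ⟫) →
      ∑' γ, φ γ ⟪f, e γ⟫ ≤ M → ‖f‖ ≤ r := by
    intro M
    refine ⟨√(max 1 (M / c) / c * M), fun f hf hM => Real.le_sqrt_of_sq_le ?_⟩
    calc ‖f‖ ^ 2 ≤ max 1 (M / c) / c * ∑' γ, φ γ ⟪f, e γ⟫ :=
          hasSum_le (fun γ => sq_le_mul_of_mul_abs_rpow_le hc (hw γ) (hp γ).1 (hp γ).2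
            ((hf.le_tsum γ fun i _ => hφ0 i _).trans hM))
            (e.hasSum_inner_sq f) (hf.hasSum.mul_left _)
      _ ≤ _ := by gcongr
  have hΦ_sum : ∀ f, (Summable fun γ => φ γ ⟪f, e γ⟫) →
      Φ f = ENNReal.ofReal (penalizedLeastSquares e K g φ f) := fun f hf => by
    rw [hΦ, penalizedLeastSquares, ENNReal.ofReal_add (sq_nonneg _)
      (tsum_nonneg fun γ => hφ0 γ _), ENNReal.ofReal_tsum_of_nonneg (fun γ => hφ0 γ _) hf]
  have hΦ_top : ∀ f, Φ f ≠ ⊤ → Summable fun γ => φ γ ⟪f, e γ⟫ := fun f hf => by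
    rw [hΦ] at hf
    exact (ENNReal.summable_toReal (ENNReal.add_ne_top.1 hf).2).congr fun γ =>
      ENNReal.toReal_ofReal (hφ0 γ _)
  have hPnonneg : ∀ f, 0 ≤ penalizedLeastSquares e K g φ f := fun f =>
    add_nonneg (sq_nonneg _) (tsum_nonneg fun γ => hφ0 γ _)
  obtain ⟨a, hweak, hasum, hamin⟩ := exists_weak_limit_isMinimizer (x := fun n => fseq (n + 1))
    hK.le hφ0 hφ hφc hcoer (summable_penalty_of_isMinimizer hφ0 hφ (hmin 0) hzero)
    (fun n => hmin (n + 1))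
  have ha : ∀ f, Φ a ≤ Φ f := fun f => by
    by_cases hf : Φ f = ⊤
    · exact hf ▸ le_top
    · rw [hΦ_sum a hasum, hΦ_sum f (hΦ_top f hf)]
      exact ENNReal.ofReal_le_ofReal (hamin f (hΦ_top f hf))
  refine ⟨⟨a, fun y => (tendsto_add_atTop_iff_nat 1).1 (hweak y), ha⟩, fun hstrict =>
    ⟨a, ha, fun b hb => ?_⟩⟩
  have hbsum : Summable fun γ => φ γ ⟪b, e γ⟫ :=
    hΦ_top b (ne_top_of_le_ne_top (hΦ_sum a hasum ▸ ENNReal.ofReal_ne_top) (hb a))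
  refine eq_of_isMinimizer hφ hφ0 (hstrict.imp_right fun h γ => ?_) hbsum hasum
    (fun h hh => ?_) hamin
  · have hwpos : 0 < w γ := hc.trans_le (hw γ)
    refine ⟨convex_univ, fun s hs t ht hst α β hα hβ hαβ => ?_⟩
    have := mul_lt_mul_of_pos_left
      ((strictConvexOn_abs_rpow (h γ)).2 hs ht hst hα hβ hαβ) hwpos
    simp only [smul_eq_mul, φ] at this ⊢
    linarith
  · have := hb h
    rwa [hΦ_sum b hbsum, hΦ_sum h hh, ENNReal.ofReal_le_ofReal_iff (hPnonneg h)] at this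
end

section
/- Let H and H' be real Hilbert spaces, (e_γ)_{γ∈Γ} an orthonormal (Hilbert) basis of H indexed by a countable set Γ, and K : H → H' a bounded linear operator with ‖K‖ < 1. Let Γ = Γ₁ ∪ … ∪ Γ_n be a partition into finitely many nonempty sets, let (w_γ)_{γ∈Γ} be weights with w_γ ≥ c for a fixed c > 0, and let p₁, …, p_n ∈ [1,2]; write p_γ = p_i for γ ∈ Γ_i and N(f) = Σ_γ w_γ |⟨f, e_γ⟩|^{p_γ}. Assume either K is injective or p_i > 1 for every i. For α = (α₁, …, α_n) with all α_i > 0 and g ∈ H', the functional Φ_{α;g}(f) = ‖Kf − g‖² + Σ_{i=1}^n α_i Σ_{γ∈Γ_i} w_γ |⟨f, e_γ⟩|^{p_i} has a unique minimizer f*_{α;g} ∈ H. Let f₀ ∈ H, S = { f : Kf = Kf₀ }, assume there exists f ∈ S with N(f) < ∞, and let f† be the unique element of S with N(f†) ≤ N(f) for all f ∈ S. Let α_i : (0, ∞) → (0, ∞) for 1 ≤ i ≤ n satisfy, as ε → 0: α_i(ε) → 0, ε²/α_i(ε) → 0, and α_i(ε)/α_j(ε) → 1 for all i, j. Then lim_{ε→0}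 sup { ‖f*_{α(ε);g} − f†‖ : g ∈ H', ‖g − Kf₀‖ < ε } = 0. -/
open scoped RealInnerProductSpace ENNReal
open Filter Topology

section Scalar

theorem two_mul_abs_midpoint_rpow_le {q : ℝ} (hq : 1 ≤ q) (a b : ℝ) :
    2 * |(1 / 2 : ℝ) * (a + b)| ^ q ≤ |a| ^ q + |b| ^ q := by
  have h := (convexOn_rpow hq).2 (abs_nonneg a) (abs_nonneg b)
    (by norm_num : (0 : ℝ) ≤ 1 / 2) (by norm_num : (0 : ℝ) ≤ 1 / 2) (by norm_num)
  simp only [smul_eq_mul] at h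
  have h' : |(1 / 2 : ℝ) * (a + b)| ^ q ≤ (1 / 2 * |a| + 1 / 2 * |b|) ^ q := by
    apply Real.rpow_le_rpow (abs_nonneg _) _ (by linarith)
    rw [abs_mul, abs_of_pos (by norm_num : (0 : ℝ) < 1 / 2)]
    linarith [abs_add_le a b]
  linarith

theorem two_mul_abs_midpoint_rpow_lt {q : ℝ} (hq : 1 < q) {a b : ℝ} (hab : a ≠ b) :
    2 * |(1 / 2 : ℝ) * (a + b)| ^ q < |a| ^ q + |b| ^ q := by
  by_cases h : |a| = |b|
  · obtain h | h := abs_eq_abs.1 h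
    · exact absurd h hab
    · subst h
      have hb : b ≠ 0 := by
        rintro rfl
        simp at hab
      have : 0 < |b| ^ q := Real.rpow_pos_of_pos (abs_pos.2 hb) _
      rw [neg_add_cancel, mul_zero, abs_zero, Real.zero_rpow (by linarith), abs_neg]
      linarith
  · have h2 := (strictConvexOn_rpow hq).2 (abs_nonneg a) (abs_nonneg b) h
      (by norm_num : (0 : ℝ) < 1 / 2) (by norm_num : (0 : ℝ) < 1 / 2) (by norm_num)
    simp only [smul_eq_mul] at h2
    have h' : |(1 / 2 : ℝ) * (a + b)| ^ q ≤ (1 / 2 * |a| + 1 / 2 * |b|) ^ q := by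
      apply Real.rpow_le_rpow (abs_nonneg _) _ (by linarith)
      rw [abs_mul, abs_of_pos (by norm_num : (0 : ℝ) < 1 / 2)]
      linarith [abs_add_le a b]
    linarith

theorem abs_sub_rpow_le {q : ℝ} (hq : 1 ≤ q) (hq2 : q ≤ 2) (a b : ℝ) :
    |a - b| ^ q ≤ 2 * (|a| ^ q + |b| ^ q) := by
  have h := two_mul_abs_midpoint_rpow_le hq a (-b)
  rw [abs_neg, abs_mul, Real.mul_rpow (abs_nonneg _) (abs_nonneg _), ← sub_eq_add_neg,
    abs_of_pos (by norm_num : (0 : ℝ) < 1 / 2)] at h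
  have h4 : (1 / 2 : ℝ) ^ (2 : ℝ) ≤ (1 / 2 : ℝ) ^ q :=
    Real.rpow_le_rpow_of_exponent_ge (by norm_num) (by norm_num) hq2
  norm_num at h4 h
  have := Real.rpow_nonneg (abs_nonneg (a - b)) q
  nlinarith

theorem sq_le_of_rpow_le {q t R : ℝ} (hq : 1 ≤ q) (hq2 : q ≤ 2) (ht : 0 ≤ t)
    (h : t ^ q ≤ R) : t ^ 2 ≤ (1 + R) * t ^ q := by
  have hR : 0 ≤ R := (Real.rpow_nonneg ht q).trans h
  have htR : t ≤ 1 + R := by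
    rcases le_total t 1 with h1 | h1
    · linarith
    · have := Real.rpow_le_rpow_of_exponent_le h1 hq
      rw [Real.rpow_one] at this
      linarith
  have h2 : t ^ (2 - q) ≤ 1 + R := by
    calc t ^ (2 - q) ≤ (1 + R) ^ (2 - q) := Real.rpow_le_rpow ht htR (by linarith)
      _ ≤ (1 + R) ^ (1 : ℝ) := Real.rpow_le_rpow_of_exponent_le (by linarith) (by linarith)
      _ = 1 + R := Real.rpow_one _
  have h3 : t ^ 2 = t ^ (2 - q) * t ^ q := by
    rw [← Real.rpow_add_of_nonneg ht (by linarith) (by linarith), sub_add_cancel,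
      Real.rpow_two]
  rw [h3]
  exact mul_le_mul_of_nonneg_right h2 (Real.rpow_nonneg ht q)

end Scalar

/-- A Fatou-type bound for sums of extended nonnegative reals along an arbitrary filter. -/
theorem ENNReal.tsum_le_of_tendsto_of_eventually_le {ι Γ : Type*} {l : Filter ι} [l.NeBot]
    {u : ι → Γ → ℝ≥0∞} {v : Γ → ℝ≥0∞} {M : ℝ≥0∞}
    (h : ∀ γ, Tendsto (fun k => u k γ) l (𝓝 (v γ))) (hM : ∀ᶠ k in l, ∑' γ, u k γ ≤ M) :
    ∑' γ, v γ ≤ M := by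
  rw [ENNReal.tsum_eq_iSup_sum]
  refine iSup_le fun s => le_of_tendsto (tendsto_finsetSum s fun γ _ => h γ) ?_
  filter_upwards [hM] with k hk
  exact (ENNReal.sum_le_tsum s).trans hk

section Hilbert

variable {H : Type*} [NormedAddCommGroup H] [InnerProductSpace ℝ H]

theorem two_mul_norm_midpoint_sub_sq (a b g : H) :
    2 * ‖(1 / 2 : ℝ) • (a + b) - g‖ ^ 2 =
      ‖a - g‖ ^ 2 + ‖b - g‖ ^ 2 - ‖a - b‖ ^ 2 / 2 := by
  have h1 : (1 / 2 : ℝ) • (a + b) - g = (1 / 2 : ℝ) • ((a - g) + (b - g)) := by module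
  have h2 : a - b = (a - g) - (b - g) := by abel
  rw [h1, h2, norm_smul, mul_pow, norm_add_sq_real, norm_sub_sq_real (a - g) (b - g)]
  norm_num
  ring

/-- Every bounded family in a Hilbert space converges weakly along an ultrafilter. -/
theorem Ultrafilter.exists_tendsto_inner_of_eventually_norm_le [CompleteSpace H] {ι : Type*}
    (U : Ultrafilter ι) {x : ι → H} {R : ℝ} (hR : ∀ᶠ k in (U : Filter ι), ‖x k‖ ≤ R) :
    ∃ y : H, ∀ z : H, Tendsto (fun k => ⟪x k, z⟫) U (𝓝 ⟪y, z⟫) := by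
  let φ : ι → WeakDual ℝ H := fun k => StrongDual.toWeakDual (InnerProductSpace.toDual ℝ H (x k))
  obtain ⟨ψ, -, hψ⟩ := (WeakDual.isCompact_closedBall (0 : StrongDual ℝ H) R).ultrafilter_le_nhds
    (U.map φ) (by
      rw [le_principal_iff]
      change ∀ᶠ k in (U : Filter ι), φ k ∈ _
      filter_upwards [hR] with k hk
      simpa [φ] using hk)
  refine ⟨(InnerProductSpace.toDual ℝ H).symm (WeakDual.toStrongDual ψ), fun z => ?_⟩
  have h := ((WeakDual.eval_continuous z).tendsto ψ).comp (show Tendsto φ U (𝓝 ψ) from hψ)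
  simpa [φ, Function.comp_def] using h

variable {Γ : Type*} (e : HilbertBasis Γ ℝ H)

theorem HilbertBasis.ext_inner_basis {x y : H} (h : ∀ γ, ⟪x, e γ⟫ = ⟪y, e γ⟫) : x = y := by
  apply e.repr.injective
  ext γ
  rw [e.repr_apply_apply, e.repr_apply_apply, real_inner_comm, h, real_inner_comm]

theorem HilbertBasis.ofReal_norm_sq (x : H) :
    ENNReal.ofReal (‖x‖ ^ 2) = ∑' γ, ENNReal.ofReal (|⟪x, e γ⟫| ^ 2) := by
  have h := e.hasSum_inner_mul_inner x x
  have h2 : (fun γ => ⟪x, e γ⟫ * ⟪e γ, x⟫) = fun γ => |⟪x, e γ⟫| ^ 2 := by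
    funext γ
    rw [real_inner_comm x (e γ), sq_abs, sq]
  rw [h2, real_inner_self_eq_norm_sq] at h
  rw [← h.tsum_eq, ENNReal.ofReal_tsum_of_nonneg (fun _ => by positivity) h.summable]

/-- The weighted mixed-power penalty of the coefficients of `f` in the basis `e`. -/
noncomputable def coeffPenalty (w q : Γ → ℝ) (f : H) : ℝ≥0∞ :=
  ∑' γ, ENNReal.ofReal (w γ * |⟪f, e γ⟫| ^ q γ)

variable {e} {w q : Γ → ℝ}

theorem coeffPenalty_zero (hq : ∀ γ, 1 ≤ q γ) : coeffPenalty e w q 0 = 0 := by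
  unfold coeffPenalty
  refine ENNReal.tsum_eq_zero.2 fun γ => ?_
  rw [inner_zero_left, abs_zero, Real.zero_rpow (by linarith [hq γ])]
  simp

theorem coeffPenalty_mul_le (hw : ∀ γ, 0 ≤ w γ) {s : Γ → ℝ} {a : ℝ} (ha : 0 ≤ a)
    (hs : ∀ γ, s γ ≤ a) (f : H) :
    coeffPenalty e (fun γ => s γ * w γ) q f ≤ ENNReal.ofReal a * coeffPenalty e w q f := by
  unfold coeffPenalty
  rw [← ENNReal.tsum_mul_left]
  refine ENNReal.tsum_le_tsum fun γ => ?_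
  rw [← ENNReal.ofReal_mul ha, ← mul_assoc]
  have := mul_le_mul_of_nonneg_right (hs γ) (hw γ)
  gcongr

theorem mul_coeffPenalty_le (hw : ∀ γ, 0 ≤ w γ) {s : Γ → ℝ} {a : ℝ} (ha : 0 ≤ a)
    (hs : ∀ γ, a ≤ s γ) (f : H) :
    ENNReal.ofReal a * coeffPenalty e w q f ≤ coeffPenalty e (fun γ => s γ * w γ) q f := by
  unfold coeffPenalty
  rw [← ENNReal.tsum_mul_left]
  refine ENNReal.tsum_le_tsum fun γ => ?_
  rw [← ENNReal.ofReal_mul ha, ← mul_assoc]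
  have := mul_le_mul_of_nonneg_right (hs γ) (hw γ)
  gcongr

theorem two_mul_ofReal_midpoint_le (hw : ∀ γ, 0 ≤ w γ) (hq : ∀ γ, 1 ≤ q γ) (f f' : H) (γ : Γ) :
    2 * ENNReal.ofReal (w γ * |⟪(1 / 2 : ℝ) • (f + f'), e γ⟫| ^ q γ) ≤
      ENNReal.ofReal (w γ * |⟪f, e γ⟫| ^ q γ) + ENNReal.ofReal (w γ * |⟪f', e γ⟫| ^ q γ) := by
  have := hw γ
  rw [← ENNReal.ofReal_add (by positivity) (by positivity),
    show (2 : ℝ≥0∞) = ENNReal.ofReal 2 by simp, ← ENNReal.ofReal_mul (by norm_num),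
    real_inner_smul_left, inner_add_left]
  apply ENNReal.ofReal_le_ofReal
  nlinarith [two_mul_abs_midpoint_rpow_le (hq γ) ⟪f, e γ⟫ ⟪f', e γ⟫]

theorem two_mul_coeffPenalty_midpoint_le (hw : ∀ γ, 0 ≤ w γ) (hq : ∀ γ, 1 ≤ q γ) (f f' : H) :
    2 * coeffPenalty e w q ((1 / 2 : ℝ) • (f + f')) ≤
      coeffPenalty e w q f + coeffPenalty e w q f' := by
  unfold coeffPenalty
  rw [← ENNReal.tsum_mul_left, ← ENNReal.tsum_add]
  exact ENNReal.tsum_le_tsum fun γ => two_mul_ofReal_midpoint_le hw hq f f' γ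

theorem two_mul_coeffPenalty_midpoint_lt (hw : ∀ γ, 0 < w γ) (hq : ∀ γ, 1 < q γ) {f f' : H}
    (hf : coeffPenalty e w q f ≠ ⊤) (hf' : coeffPenalty e w q f' ≠ ⊤) (hne : f ≠ f') :
    2 * coeffPenalty e w q ((1 / 2 : ℝ) • (f + f')) <
      coeffPenalty e w q f + coeffPenalty e w q f' := by
  have hle := two_mul_coeffPenalty_midpoint_le (e := e) (fun γ => (hw γ).le)
    (fun γ => (hq γ).le) f f'
  have hfin := ne_top_of_le_ne_top (ENNReal.add_ne_top.2 ⟨hf, hf'⟩) hle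
  obtain ⟨γ, hγ⟩ : ∃ γ, ⟪f, e γ⟫ ≠ ⟪f', e γ⟫ := by
    by_contra! h
    exact hne (e.ext_inner_basis h)
  unfold coeffPenalty at hfin ⊢
  rw [← ENNReal.tsum_mul_left] at hfin ⊢
  rw [← ENNReal.tsum_add]
  refine ENNReal.tsum_lt_tsum hfin
    (fun γ => two_mul_ofReal_midpoint_le (fun γ => (hw γ).le) (fun γ => (hq γ).le) f f' γ)
    (i := γ) ?_
  have h0 := hw γ
  have h1 := two_mul_abs_midpoint_rpow_lt (hq γ) hγ
  have h2 : 0 ≤ |(1 / 2 : ℝ) * (⟪f, e γ⟫ + ⟪f', e γ⟫)| ^ q γ := by positivity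
  rw [← ENNReal.ofReal_add (by positivity) (by positivity),
    show (2 : ℝ≥0∞) = ENNReal.ofReal 2 by simp, ← ENNReal.ofReal_mul (by norm_num),
    real_inner_smul_left, inner_add_left, ENNReal.ofReal_lt_ofReal_iff (by nlinarith)]
  nlinarith

theorem norm_sq_le_of_coeffPenalty_le {c : ℝ} (hc : 0 < c) (hw : ∀ γ, c ≤ w γ)
    (hq : ∀ γ, 1 ≤ q γ) (hq2 : ∀ γ, q γ ≤ 2) {f : H} {M : ℝ} (hM : 0 ≤ M)
    (h : coeffPenalty e w q f ≤ ENNReal.ofReal M) :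
    ‖f‖ ^ 2 ≤ (1 + M / c) / c * M := by
  have hterm : ∀ γ, c * |⟪f, e γ⟫| ^ q γ ≤ w γ * |⟪f, e γ⟫| ^ q γ := fun γ =>
    mul_le_mul_of_nonneg_right (hw γ) (by positivity)
  have hMc : 0 ≤ M / c := by positivity
  rw [← ENNReal.ofReal_le_ofReal_iff (by positivity), e.ofReal_norm_sq,
    ENNReal.ofReal_mul (by positivity)]
  refine le_trans ?_ (mul_le_mul_right h _)
  unfold coeffPenalty
  rw [← ENNReal.tsum_mul_left]
  refine ENNReal.tsum_le_tsum fun γ => ?_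
  rw [← ENNReal.ofReal_mul (by positivity)]
  apply ENNReal.ofReal_le_ofReal
  have h1 : w γ * |⟪f, e γ⟫| ^ q γ ≤ M :=
    (ENNReal.ofReal_le_ofReal_iff hM).1 ((ENNReal.le_tsum γ).trans h)
  have h2 : |⟪f, e γ⟫| ^ q γ ≤ M / c := by
    rw [le_div_iff₀ hc]
    linarith [hterm γ]
  calc |⟪f, e γ⟫| ^ 2 ≤ (1 + M / c) * |⟪f, e γ⟫| ^ q γ :=
        sq_le_of_rpow_le (hq γ) (hq2 γ) (abs_nonneg _) h2
    _ = (1 + M / c) / c * (c * |⟪f, e γ⟫| ^ q γ) := by field_simp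
    _ ≤ _ := mul_le_mul_of_nonneg_left (hterm γ) (by positivity)

theorem tendsto_coeffPenalty_sub {ι : Type*} (U : Ultrafilter ι) {x : ι → H} {y : H}
    (hw : ∀ γ, 0 ≤ w γ) (hq : ∀ γ, 1 ≤ q γ) (hq2 : ∀ γ, q γ ≤ 2)
    (hxy : ∀ γ, Tendsto (fun k => ⟪x k, e γ⟫) U (𝓝 ⟪y, e γ⟫))
    (hy : coeffPenalty e w q y ≠ ⊤)
    (hlim : ∀ M : ℝ, (coeffPenalty e w q y).toReal < M →
      ∀ᶠ k in (U : Filter ι), coeffPenalty e w q (x k) ≤ ENNReal.ofReal M)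
    {δ : ℝ} (hδ : 0 < δ) :
    ∀ᶠ k in (U : Filter ι), coeffPenalty e w q (x k - y) ≤ ENNReal.ofReal δ := by
  by_contra hcon
  rw [← Ultrafilter.eventually_not] at hcon
  set Y := (coeffPenalty e w q y).toReal with hY
  have hY0 : 0 ≤ Y := ENNReal.toReal_nonneg
  have hYeq : coeffPenalty e w q y = ENNReal.ofReal Y := (ENNReal.ofReal_toReal hy).symm
  let d : ι → Γ → ℝ := fun k γ => 2 * (w γ * |⟪x k, e γ⟫| ^ q γ + w γ * |⟪y, e γ⟫| ^ q γ) -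
    w γ * |⟪x k - y, e γ⟫| ^ q γ
  have hd0 : ∀ k γ, 0 ≤ d k γ := fun k γ => by
    have := mul_le_mul_of_nonneg_left
      (abs_sub_rpow_le (hq γ) (hq2 γ) ⟪x k, e γ⟫ ⟪y, e γ⟫) (hw γ)
    simp only [d, inner_sub_left]
    linarith
  have hsum : ∀ k, ∑' γ, ENNReal.ofReal (d k γ) + coeffPenalty e w q (x k - y) =
      2 * (coeffPenalty e w q (x k) + coeffPenalty e w q y) := fun k => by
    unfold coeffPenalty
    rw [← ENNReal.tsum_add, ← ENNReal.tsum_add, ← ENNReal.tsum_mul_left]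
    refine tsum_congr fun γ => ?_
    have := hw γ
    rw [← ENNReal.ofReal_add (hd0 k γ) (by positivity),
      ← ENNReal.ofReal_add (by positivity) (by positivity),
      show (2 : ℝ≥0∞) = ENNReal.ofReal 2 by simp, ← ENNReal.ofReal_mul (by norm_num)]
    simp [d]
  have hlimd : ∀ γ, Tendsto (fun k => ENNReal.ofReal (d k γ)) U
      (𝓝 (ENNReal.ofReal (4 * (w γ * |⟪y, e γ⟫| ^ q γ)))) := fun γ => by
    apply ENNReal.tendsto_ofReal
    have hq0 : 0 ≤ q γ := by linarith [hq γ]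
    have h1 := (((hxy γ).abs.rpow_const (Or.inr hq0)).const_mul (w γ))
    have h2 := ((((hxy γ).sub_const ⟪y, e γ⟫).abs.rpow_const (Or.inr hq0)).const_mul (w γ))
    have h3 := ((h1.add_const (w γ * |⟪y, e γ⟫| ^ q γ)).const_mul 2).sub h2
    rw [sub_self, abs_zero, Real.zero_rpow (by linarith [hq γ])] at h3
    simp only [d, inner_sub_left]
    convert h3 using 2
    ring
  have hle : ∀ᶠ k in (U : Filter ι),
      ∑' γ, ENNReal.ofReal (d k γ) + ENNReal.ofReal δ ≤ ENNReal.ofReal (4 * Y + δ / 2) := by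
    filter_upwards [hcon, hlim (Y + δ / 4) (by linarith)] with k hk hk2
    rw [not_le] at hk
    calc _ ≤ ∑' γ, ENNReal.ofReal (d k γ) + coeffPenalty e w q (x k - y) := by gcongr
      _ ≤ 2 * (ENNReal.ofReal (Y + δ / 4) + ENNReal.ofReal Y) := by
          rw [hsum, hYeq]
          gcongr
      _ = ENNReal.ofReal (2 * ((Y + δ / 4) + Y)) := by
          rw [← ENNReal.ofReal_add (by positivity) hY0, ENNReal.ofReal_mul (by norm_num)]
          simp
      _ = _ := by
          congr 1
          ring
  have hδY : δ ≤ 4 * Y + δ / 2 := by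
    obtain ⟨k, hk⟩ := hle.exists
    exact (ENNReal.ofReal_le_ofReal_iff (by positivity)).1 (le_add_self.trans hk)
  have hbound : ∀ᶠ k in (U : Filter ι),
      ∑' γ, ENNReal.ofReal (d k γ) ≤ ENNReal.ofReal (4 * Y + δ / 2 - δ) := by
    filter_upwards [hle] with k hk
    rw [ENNReal.ofReal_sub _ hδ.le]
    exact ENNReal.le_sub_of_add_le_right ENNReal.ofReal_ne_top hk
  have hfatou := ENNReal.tsum_le_of_tendsto_of_eventually_le hlimd hbound
  have h4 : ∑' γ, ENNReal.ofReal (4 * (w γ * |⟪y, e γ⟫| ^ q γ)) = ENNReal.ofReal (4 * Y) := by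
    rw [ENNReal.ofReal_mul (by norm_num), ← hYeq]
    unfold coeffPenalty
    rw [← ENNReal.tsum_mul_left]
    exact tsum_congr fun γ => ENNReal.ofReal_mul (by norm_num)
  rw [h4, ENNReal.ofReal_le_ofReal_iff (by linarith)] at hfatou
  linarith

theorem tendsto_of_tendsto_coeff_of_coeffPenalty_le {ι : Type*} (U : Ultrafilter ι) {x : ι → H}
    {y : H} {c : ℝ} (hc : 0 < c) (hw : ∀ γ, c ≤ w γ) (hq : ∀ γ, 1 ≤ q γ) (hq2 : ∀ γ, q γ ≤ 2)
    (hxy : ∀ γ, Tendsto (fun k => ⟪x k, e γ⟫) U (𝓝 ⟪y, e γ⟫))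
    (hy : coeffPenalty e w q y ≠ ⊤)
    (hlim : ∀ M : ℝ, (coeffPenalty e w q y).toReal < M →
      ∀ᶠ k in (U : Filter ι), coeffPenalty e w q (x k) ≤ ENNReal.ofReal M) :
    Tendsto x U (𝓝 y) := by
  rw [Metric.tendsto_nhds]
  intro r hr
  have hcont : Tendsto (fun δ : ℝ => (1 + δ / c) / c * δ) (𝓝[>] 0) (𝓝 0) := by
    have h : Continuous fun δ : ℝ => (1 + δ / c) / c * δ := by fun_prop
    simpa using (h.tendsto 0).mono_left nhdsWithin_le_nhds
  obtain ⟨δ, hδr, hδ⟩ := ((hcont.eventually (gt_mem_nhds (pow_pos hr 2))).and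
    self_mem_nhdsWithin).exists
  filter_upwards [tendsto_coeffPenalty_sub U (fun γ => hc.le.trans (hw γ)) hq hq2 hxy hy hlim hδ]
    with k hk
  rw [dist_eq_norm]
  have := norm_sq_le_of_coeffPenalty_le hc hw hq hq2 (le_of_lt hδ) hk
  exact lt_of_pow_lt_pow_left₀ 2 hr.le (this.trans_lt hδr)

/-- A family whose images under `K` converge to `K y` and whose penalties are asymptotically at
most that of `y`, the unique penalty-minimizing solution, converges to `y`. -/
theorem tendsto_of_tendsto_map_of_coeffPenalty_le [CompleteSpace H] {H' : Type*}
    [NormedAddCommGroup H'] [InnerProductSpace ℝ H'] [CompleteSpace H'] (K : H →L[ℝ] H')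
    {ι : Type*} (l : Filter ι) {x : ι → H}
    {y : H} {c : ℝ} (hc : 0 < c) (hw : ∀ γ, c ≤ w γ) (hq : ∀ γ, 1 ≤ q γ) (hq2 : ∀ γ, q γ ≤ 2)
    (hy : coeffPenalty e w q y ≠ ⊤)
    (huniq : ∀ z, K z = K y → coeffPenalty e w q z ≤ coeffPenalty e w q y → z = y)
    (hK : Tendsto (fun k => K (x k)) l (𝓝 (K y)))
    (hlim : ∀ M : ℝ, (coeffPenalty e w q y).toReal < M →
      ∀ᶠ k in l, coeffPenalty e w q (x k) ≤ ENNReal.ofReal M) :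
    Tendsto x l (𝓝 y) := by
  rw [tendsto_iff_ultrafilter]
  intro U hU
  have hlimU : ∀ M : ℝ, (coeffPenalty e w q y).toReal < M →
      ∀ᶠ k in (U : Filter ι), coeffPenalty e w q (x k) ≤ ENNReal.ofReal M :=
    fun M hM => hU (hlim M hM)
  set Y := (coeffPenalty e w q y).toReal with hY
  have hY0 : 0 ≤ Y := ENNReal.toReal_nonneg
  obtain ⟨z, hz⟩ := U.exists_tendsto_inner_of_eventually_norm_le (x := x)
    (R := √((1 + (Y + 1) / c) / c * (Y + 1))) (by
      filter_upwards [hlimU (Y + 1) (by linarith)] with k hk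
      exact Real.le_sqrt_of_sq_le
        (norm_sq_le_of_coeffPenalty_le hc hw hq hq2 (by linarith) hk))
  have hzK : K z = K y := by
    refine ext_inner_right ℝ fun v => ?_
    have h1 : Tendsto (fun k => ⟪K (x k), v⟫) U (𝓝 ⟪K z, v⟫) := by
      simpa only [ContinuousLinearMap.adjoint_inner_right] using hz (K.adjoint v)
    exact tendsto_nhds_unique h1 ((hK.mono_left hU).inner tendsto_const_nhds)
  have hzy : coeffPenalty e w q z ≤ coeffPenalty e w q y := by
    rw [← ENNReal.ofReal_toReal hy]
    refine ENNReal.le_of_forall_pos_le_add fun δ hδ _ => ?_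
    have hM := hlimU (Y + δ) (by simpa using hδ)
    rw [← hY, ← ENNReal.ofReal_coe_nnreal, ← ENNReal.ofReal_add hY0 δ.coe_nonneg]
    refine ENNReal.tsum_le_of_tendsto_of_eventually_le (fun γ => ?_) hM
    apply ENNReal.tendsto_ofReal
    exact (((hz (e γ)).abs.rpow_const (Or.inr (by linarith [hq γ]))).const_mul (w γ))
  obtain rfl := huniq z hzK hzy
  exact tendsto_of_tendsto_coeff_of_coeffPenalty_le U hc hw hq hq2 (fun γ => hz (e γ)) hy hlimU

/-- The Tikhonov functional with a coefficient penalty has at most one minimizer. -/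
theorem eq_of_isMinimizer_s19 {H' : Type*}
    [NormedAddCommGroup H'] [InnerProductSpace ℝ H'] (K : H →L[ℝ] H') (g : H')
    (hw : ∀ γ, 0 < w γ) (hq : ∀ γ, 1 ≤ q γ)
    (hcase : Function.Injective K ∨ ∀ γ, 1 < q γ) {f f' : H}
    (hf : ∀ h, ENNReal.ofReal (‖K f - g‖ ^ 2) + coeffPenalty e w q f ≤
      ENNReal.ofReal (‖K h - g‖ ^ 2) + coeffPenalty e w q h)
    (hf' : ∀ h, ENNReal.ofReal (‖K f' - g‖ ^ 2) + coeffPenalty e w q f' ≤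
      ENNReal.ofReal (‖K h - g‖ ^ 2) + coeffPenalty e w q h) : f = f' := by
  by_contra hne
  have hfin : ∀ {u : H}, (∀ h, ENNReal.ofReal (‖K u - g‖ ^ 2) + coeffPenalty e w q u ≤
      ENNReal.ofReal (‖K h - g‖ ^ 2) + coeffPenalty e w q h) → coeffPenalty e w q u ≠ ⊤ := by
    intro u hu
    have h0 := hu 0
    rw [coeffPenalty_zero hq, add_zero] at h0
    exact ne_top_of_le_ne_top ENNReal.ofReal_ne_top (le_add_self.trans h0)
  have hP := hfin hf
  have hP' := hfin hf'
  set m : H := (1 / 2 : ℝ) • (f + f') with hm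
  have hmle := two_mul_coeffPenalty_midpoint_le (e := e) (fun γ => (hw γ).le) hq f f'
  have hsumfin := ENNReal.add_ne_top.2 ⟨hP, hP'⟩
  have hPm : coeffPenalty e w q m ≠ ⊤ := fun h => by
    rw [← hm, h] at hmle
    exact hsumfin (top_le_iff.1 (by simpa using hmle))
  have toReal_le : ∀ {u : H}, coeffPenalty e w q u ≠ ⊤ →
      ENNReal.ofReal (‖K u - g‖ ^ 2) + coeffPenalty e w q u ≤
        ENNReal.ofReal (‖K m - g‖ ^ 2) + coeffPenalty e w q m →
      ‖K u - g‖ ^ 2 + (coeffPenalty e w q u).toReal ≤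
        ‖K m - g‖ ^ 2 + (coeffPenalty e w q m).toReal := by
    intro u hu h
    have := ENNReal.toReal_mono (ENNReal.add_ne_top.2 ⟨ENNReal.ofReal_ne_top, hPm⟩) h
    rwa [ENNReal.toReal_add ENNReal.ofReal_ne_top hu,
      ENNReal.toReal_add ENNReal.ofReal_ne_top hPm, ENNReal.toReal_ofReal (by positivity),
      ENNReal.toReal_ofReal (by positivity)] at this
  have h1 := toReal_le hP (hf m)
  have h2 := toReal_le hP' (hf' m)
  have hKm := two_mul_norm_midpoint_sub_sq (K f) (K f') g
  rw [← map_add, ← map_smul, ← hm] at hKm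
  have hmleR : 2 * (coeffPenalty e w q m).toReal ≤
      (coeffPenalty e w q f).toReal + (coeffPenalty e w q f').toReal := by
    have := ENNReal.toReal_mono hsumfin hmle
    rwa [ENNReal.toReal_add hP hP', ENNReal.toReal_mul, ENNReal.toReal_ofNat] at this
  rcases hcase with hinj | hq1
  · have : 0 < ‖K f - K f'‖ := norm_pos_iff.2 (sub_ne_zero.2 (hinj.ne hne))
    nlinarith
  · have hlt := (ENNReal.toReal_lt_toReal (ne_top_of_le_ne_top hsumfin hmle) hsumfin).2
      (two_mul_coeffPenalty_midpoint_lt hw hq1 hP hP' hne)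
    rw [ENNReal.toReal_add hP hP', ENNReal.toReal_mul, ENNReal.toReal_ofNat, ← hm] at hlt
    have hnonneg := sq_nonneg ‖K f - K f'‖
    linarith only [hKm, h1, h2, hlt, hnonneg]

/-- Comparing a minimizer `x` with a candidate `y` when all regularization parameters `s γ` are
within relative distance `η` of a common value `a`. -/
theorem coeffPenalty_estimate_of_le {H' : Type*}
    [NormedAddCommGroup H'] [InnerProductSpace ℝ H'] (K : H →L[ℝ] H') {g : H'}
    (hw : ∀ γ, 0 ≤ w γ) {s : Γ → ℝ} {a η ε : ℝ} (ha : 0 < a) (hη0 : 0 ≤ η) (hη1 : η < 1)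
    (hs1 : ∀ γ, (1 - η) * a ≤ s γ) (hs2 : ∀ γ, s γ ≤ (1 + η) * a) {x y : H}
    (hgy : ‖K y - g‖ ≤ ε) (hy : coeffPenalty e w q y ≠ ⊤)
    (hxy : ENNReal.ofReal (‖K x - g‖ ^ 2) + coeffPenalty e (fun γ => s γ * w γ) q x ≤
      ENNReal.ofReal (‖K y - g‖ ^ 2) + coeffPenalty e (fun γ => s γ * w γ) q y) :
    coeffPenalty e w q x ≠ ⊤ ∧
      ‖K x - g‖ ^ 2 + (1 - η) * a * (coeffPenalty e w q x).toReal ≤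
        ε ^ 2 + (1 + η) * a * (coeffPenalty e w q y).toReal := by
  have hη : 0 < 1 - η := by linarith
  have hlow : 0 < (1 - η) * a := by positivity
  have key : ENNReal.ofReal (‖K x - g‖ ^ 2) +
        ENNReal.ofReal ((1 - η) * a) * coeffPenalty e w q x ≤
      ENNReal.ofReal (ε ^ 2) + ENNReal.ofReal ((1 + η) * a) * coeffPenalty e w q y := by
    calc _ ≤ _ := add_le_add_right (mul_coeffPenalty_le hw hlow.le hs1 x) _
      _ ≤ _ := hxy
      _ ≤ _ := add_le_add (ENNReal.ofReal_le_ofReal (by gcongr))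
        (coeffPenalty_mul_le hw (by positivity) hs2 y)
  have hR : ENNReal.ofReal (ε ^ 2) + ENNReal.ofReal ((1 + η) * a) * coeffPenalty e w q y ≠ ⊤ :=
    ENNReal.add_ne_top.2 ⟨ENNReal.ofReal_ne_top, ENNReal.mul_ne_top ENNReal.ofReal_ne_top hy⟩
  have hx : coeffPenalty e w q x ≠ ⊤ := by
    intro h
    rw [h, ENNReal.mul_top (by simpa using hlow), add_top, top_le_iff] at key
    exact hR key
  refine ⟨hx, ?_⟩
  have := ENNReal.toReal_mono hR key
  rwa [ENNReal.toReal_add ENNReal.ofReal_ne_top (ENNReal.mul_ne_top ENNReal.ofReal_ne_top hx),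
    ENNReal.toReal_add ENNReal.ofReal_ne_top (ENNReal.mul_ne_top ENNReal.ofReal_ne_top hy),
    ENNReal.toReal_mul, ENNReal.toReal_mul, ENNReal.toReal_ofReal (by positivity),
    ENNReal.toReal_ofReal hlow.le, ENNReal.toReal_ofReal (by positivity),
    ENNReal.toReal_ofReal (by positivity)] at this

end Hilbert

/-- Regularization theorem: each `Φ_{α;g}` (with all `α_i > 0`) has a unique minimizer
`f*_{α;g}`, and as `ε → 0⁺`, `sup { ‖f*_{α(ε);g} − f†‖ : ‖g − Kf₀‖ < ε } → 0`, where `f†` is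
the `N`-minimal element of `{f : Kf = Kf₀}`. -/
theorem stmt_19
    {H H' : Type*} [NormedAddCommGroup H] [InnerProductSpace ℝ H] [CompleteSpace H]
    [NormedAddCommGroup H'] [InnerProductSpace ℝ H'] [CompleteSpace H']
    {Γ : Type*} [Countable Γ]
    (e : HilbertBasis Γ ℝ H)
    (K : H →L[ℝ] H') (hKnorm : ‖K‖ < 1)
    (n : ℕ) (part : Γ → Fin n) (hpart : Function.Surjective part)
    (w : Γ → ℝ) (c : ℝ) (hc : 0 < c) (hw : ∀ γ, c ≤ w γ)
    (p : Fin n → ℝ) (hp : ∀ i, 1 ≤ p i ∧ p i ≤ 2)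
    (Nf : H → ℝ≥0∞)
    (hNf : ∀ f, Nf f = ∑' γ, ENNReal.ofReal (w γ * |⟪f, e γ⟫| ^ (p (part γ))))
    (hcase : Function.Injective K ∨ ∀ i, 1 < p i)
    (Φ : (Fin n → ℝ) → H' → H → ℝ≥0∞)
    (hΦ : ∀ α g f, Φ α g f = ENNReal.ofReal (‖K f - g‖ ^ 2) +
      ∑' γ, ENNReal.ofReal (α (part γ) * (w γ * |⟪f, e γ⟫| ^ (p (part γ)))))
    (fstar : (Fin n → ℝ) → H' → H)
    (hfstar : ∀ (α : Fin n → ℝ) (g : H'), (∀ i, 0 < α i) →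
      ∀ f : H, Φ α g (fstar α g) ≤ Φ α g f)
    (f0 : H)
    (hex : ∃ f : H, K f = K f0 ∧ Nf f ≠ ⊤)
    (fd : H) (hfd1 : K fd = K f0)
    (hfd2 : ∀ f : H, K f = K f0 → Nf fd ≤ Nf f)
    (αf : Fin n → ℝ → ℝ)
    (hαpos : ∀ i ε, 0 < ε → 0 < αf i ε)
    (hα0 : ∀ i, Filter.Tendsto (fun ε => αf i ε) (nhdsWithin 0 (Set.Ioi 0)) (nhds 0))
    (hα1 : ∀ i, Filter.Tendsto (fun ε => ε ^ 2 / αf i ε)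
      (nhdsWithin 0 (Set.Ioi 0)) (nhds 0))
    (hα2 : ∀ i j, Filter.Tendsto (fun ε => αf i ε / αf j ε)
      (nhdsWithin 0 (Set.Ioi 0)) (nhds 1)) :
    (∀ (α : Fin n → ℝ) (g : H'), (∀ i, 0 < α i) →
      ∃! fm : H, ∀ f : H, Φ α g fm ≤ Φ α g f) ∧
    Filter.Tendsto
      (fun ε : ℝ => ⨆ g ∈ { g : H' | ‖g - K f0‖ < ε },
        (‖fstar (fun i => αf i ε) g - fd‖₊ : ℝ≥0∞))
      (nhdsWithin 0 (Set.Ioi 0)) (nhds 0) := by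
  have hq : ∀ γ, 1 ≤ p (part γ) := fun γ => (hp _).1
  have hq2 : ∀ γ, p (part γ) ≤ 2 := fun γ => (hp _).2
  have hw0 : ∀ γ, 0 < w γ := fun γ => hc.trans_le (hw γ)
  have hΦ' : ∀ α g f, Φ α g f = ENNReal.ofReal (‖K f - g‖ ^ 2) +
      coeffPenalty e (fun γ => α (part γ) * w γ) (fun γ => p (part γ)) f := by
    intro α g f
    simp only [hΦ, coeffPenalty, mul_assoc]
  have hNf' : ∀ f, Nf f = coeffPenalty e w (fun γ => p (part γ)) f := hNf
  have hcase' : Function.Injective K ∨ ∀ γ, 1 < p (part γ) := hcase.imp_right fun h γ => h _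
  refine ⟨fun α g hα => ⟨fstar α g, hfstar α g hα, fun f hf => ?_⟩, ?_⟩
  · have hmin := hfstar α g hα
    simp only [hΦ'] at hf hmin
    exact eq_of_isMinimizer_s19 K g (fun γ => mul_pos (hα _) (hw0 γ)) hq hcase' hf hmin
  have hfin : coeffPenalty e w (fun γ => p (part γ)) fd ≠ ⊤ := by
    obtain ⟨f, hf, hftop⟩ := hex
    exact hNf' fd ▸ ne_top_of_le_ne_top hftop (hfd2 f hf)
  simp only [hNf'] at hfd2
  have huniq : ∀ z, K z = K fd → coeffPenalty e w (fun γ => p (part γ)) z ≤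
      coeffPenalty e w (fun γ => p (part γ)) fd → z = fd := by
    intro z hz hle
    rcases hcase' with hinj | hq1
    · exact hinj hz
    · by_contra hne
      have hlt := two_mul_coeffPenalty_midpoint_lt hw0 hq1
        (ne_top_of_le_ne_top hfin hle) hfin hne
      have hmid := hfd2 ((1 / 2 : ℝ) • (z + fd)) (by
        rw [map_smul, map_add, hz, hfd1]
        module)
      refine absurd hlt (not_lt.2 ?_)
      calc _ ≤ coeffPenalty e w (fun γ => p (part γ)) fd +
            coeffPenalty e w (fun γ => p (part γ)) fd := by gcongr
        _ ≤ _ := by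
          rw [← two_mul]
          gcongr
  let l : Filter (ℝ × H') :=
    comap Prod.fst (𝓝[>] (0 : ℝ)) ⊓ 𝓟 {k | ‖k.2 - K f0‖ < k.1}
  have hl : Tendsto Prod.fst l (𝓝[>] (0 : ℝ)) := tendsto_comap.mono_left inf_le_left
  have hlmem : ∀ᶠ k in l, ‖k.2 - K f0‖ < k.1 := mem_inf_of_right (mem_principal_self _)
  suffices hmain : Tendsto (fun k : ℝ × H' => fstar (fun i => αf i k.1) k.2) l (𝓝 fd) by
    rw [ENNReal.tendsto_nhds_zero]
    intro δ hδ
    have h := (EMetric.tendsto_nhds.1 hmain) δ hδ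
    rw [eventually_inf_principal, eventually_comap] at h
    filter_upwards [h] with ε hε
    refine iSup₂_le fun g hg => ?_
    have := (hε (ε, g) rfl hg).le
    rwa [edist_eq_enorm_sub] at this
  rcases isEmpty_or_nonempty (Fin n) with hn | ⟨⟨i₀⟩⟩
  · have hsub : ∀ f : H, f = fd := fun f => e.ext_inner_basis fun γ => hn.elim (part γ)
    rw [show (fun k : ℝ × H' => fstar (fun i => αf i k.1) k.2) = fun _ => fd from
      funext fun _ => hsub _]
    exact tendsto_const_nhds
  set Y := (coeffPenalty e w (fun γ => p (part γ)) fd).toReal with hY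
  have hY0 : 0 ≤ Y := ENNReal.toReal_nonneg
  have hest : ∀ η : ℝ, 0 < η → η < 1 → ∀ᶠ k in l, 0 < αf i₀ k.1 ∧
      coeffPenalty e w (fun γ => p (part γ)) (fstar (fun i => αf i k.1) k.2) ≠ ⊤ ∧
      ‖K (fstar (fun i => αf i k.1) k.2) - k.2‖ ^ 2 + (1 - η) * αf i₀ k.1 *
        (coeffPenalty e w (fun γ => p (part γ)) (fstar (fun i => αf i k.1) k.2)).toReal ≤
      k.1 ^ 2 + (1 + η) * αf i₀ k.1 * Y := by
    intro η hη0 hη1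
    have hratio : ∀ᶠ k in l, ∀ i, αf i k.1 / αf i₀ k.1 ∈ Set.Icc (1 - η) (1 + η) :=
      eventually_all.2 fun i => hl.eventually
        ((hα2 i i₀).eventually (Icc_mem_nhds (by linarith) (by linarith)))
    filter_upwards [hratio, hlmem, hl.eventually self_mem_nhdsWithin] with k hk hk2 hk0
    have ha := hαpos i₀ k.1 hk0
    have hmin := hfstar (fun i => αf i k.1) k.2 (fun i => hαpos i k.1 hk0) fd
    rw [hΦ', hΦ'] at hmin
    refine ⟨ha, coeffPenalty_estimate_of_le K (fun γ => (hw0 γ).le) ha hη0.le hη1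
      (fun γ => (le_div_iff₀ ha).1 (hk (part γ)).1) (fun γ => (div_le_iff₀ ha).1 (hk (part γ)).2)
      ?_ hfin hmin⟩
    rw [hfd1, norm_sub_rev]
    exact hk2.le
  have hε : Tendsto (fun k : ℝ × H' => k.1) l (𝓝 0) := hl.mono_right nhdsWithin_le_nhds
  refine tendsto_of_tendsto_map_of_coeffPenalty_le K l hc hw hq hq2 hfin huniq ?_ ?_
  · rw [hfd1, tendsto_iff_norm_sub_tendsto_zero]
    have hbound : Tendsto (fun k : ℝ × H' =>
        √(k.1 ^ 2 + (1 + 1 / 2) * αf i₀ k.1 * Y) + k.1) l (𝓝 0) := by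
      have h1 := ((hε.pow 2).add ((((hα0 i₀).comp hl).const_mul (1 + 1 / 2)).mul_const Y)).sqrt.add
        hε
      simpa using h1
    refine squeeze_zero' (Eventually.of_forall fun _ => norm_nonneg _) ?_ hbound
    filter_upwards [hest (1 / 2) (by norm_num) (by norm_num), hlmem] with k hk hk2
    obtain ⟨ha, -, hk⟩ := hk
    have hpos : 0 ≤ (1 - 1 / 2) * αf i₀ k.1 *
        (coeffPenalty e w (fun γ => p (part γ)) (fstar (fun i => αf i k.1) k.2)).toReal :=
      mul_nonneg (by linarith) ENNReal.toReal_nonneg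
    calc _ ≤ ‖K (fstar (fun i => αf i k.1) k.2) - k.2‖ + ‖k.2 - K f0‖ :=
          norm_sub_le_norm_sub_add_norm_sub _ _ _
      _ ≤ _ := add_le_add (Real.le_sqrt_of_sq_le (by linarith)) hk2.le
  · intro M hM
    have hη0 : 0 < (M - Y) / (1 + Y + M) := div_pos (by linarith) (by linarith)
    have hη1 : (M - Y) / (1 + Y + M) < 1 := (div_lt_one (by linarith)).2 (by linarith)
    have hη : (M - Y) / (1 + Y + M) * (1 + Y + M) = M - Y := div_mul_cancel₀ _ (by linarith)
    set η := (M - Y) / (1 + Y + M)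
    filter_upwards [hest η hη0 hη1, hl.eventually ((hα1 i₀).eventually (gt_mem_nhds hη0))]
      with k hk hk2
    obtain ⟨ha, hx, hk⟩ := hk
    rw [div_lt_iff₀ ha] at hk2
    refine ENNReal.le_ofReal_iff_toReal_le hx (by linarith) |>.2 ?_
    have h1 : (1 - η) * αf i₀ k.1 *
        (coeffPenalty e w (fun γ => p (part γ)) (fstar (fun i => αf i k.1) k.2)).toReal ≤
        (1 - η) * αf i₀ k.1 * M := by
      calc _ ≤ k.1 ^ 2 + (1 + η) * αf i₀ k.1 * Y := by
            linarith [sq_nonneg ‖K (fstar (fun i => αf i k.1) k.2) - k.2‖]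
        _ ≤ (η + (1 + η) * Y) * αf i₀ k.1 := by linarith
        _ = (1 - η) * αf i₀ k.1 * M := by linear_combination αf i₀ k.1 * hη
    exact le_of_mul_le_mul_left h1 (mul_pos (by linarith) ha)
end
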